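/- Let H be a coquasitriangular Hopf algebra with universal r-form r and convolution inverse r̄. Then the antipode S of H is bijective, with inverse given by S^{-1}(a) = r(a_{(1)} ⊗ S(a_{(2)})) S(a_{(3)}) r̄(S²(a_{(4)}) ⊗ S(a_{(5)})). -/

import Mathlib

open TensorProduct MulOpposite

/-- The iterated (fourfold) comultiplication `H → H ⊗ (H ⊗ (H ⊗ (H ⊗ H)))`,
giving the Sweedler components `a₍₁₎ ⊗ a₍₂₎ ⊗ a₍₃₎ ⊗ a₍₄₎ ⊗ a₍₅₎`. -/
noncomputable def comul4 {H : Type} [Ring H] [HopfAlgebra ℂ H] :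
    H →ₗ[ℂ] H ⊗[ℂ] (H ⊗[ℂ] (H ⊗[ℂ] (H ⊗[ℂ] H))) :=
  (LinearMap.lTensor H (LinearMap.lTensor H (LinearMap.lTensor H
      (Coalgebra.comul (R := ℂ))))) ∘ₗ
    (LinearMap.lTensor H (LinearMap.lTensor H (Coalgebra.comul (R := ℂ)))) ∘ₗ
    (LinearMap.lTensor H (Coalgebra.comul (R := ℂ))) ∘ₗ
    (Coalgebra.comul (R := ℂ))

/-!
Write `u(a) = r(a₍₁₎ ⊗ S a₍₂₎)` and `v(a) = r̄(S² a₍₁₎ ⊗ S a₍₂₎)`. Evaluating the identity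
`r * μ = μᵒᵖ * r` on `a₍₁₎ ⊗ S a₍₂₎`, on which `μ` is `ε(a) 1`, gives
`u(a₍₂₎) S(a₍₃₎) a₍₁₎ = u(a) 1`. Applying `S` to this identity, or replacing `a` by `S a`, turns it
into `u * S² = id * u` and `S² * (u ∘ S) = (u ∘ S) * id` in the convolution algebra `End H`. By the
first of these, `(u * v)(a) = r̄(a₍₁₎ ⊗ S a₍₃₎) u(a₍₂₎)`, which is `r̄ * r = ε` evaluated on
`a₍₁₎ ⊗ S a₍₂₎`, so `u * v = ε`. Hence `T = u * S * v` satisfies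
`S ∘ T = u * S² * v = id * u * v = id` and
`T ∘ S = (v ∘ S) * S² * (u ∘ S) = (v ∘ S) * (u ∘ S) * id = id`.
-/

open Coalgebra HopfAlgebra LinearMap WithConv

section Coalgebra

variable {R C : Type*} [CommSemiring R] [AddCommMonoid C] [Module R C] [Coalgebra R C]

lemma map_comul_comul_comp_comul :
    map comul comul ∘ₗ comul (R := R) (A := C) =
      (TensorProduct.assoc R C C (C ⊗[R] C)).symm.toLinearMap ∘ₗ
        ((TensorProduct.assoc R C C C).toLinearMap ∘ₗ comul.rTensor C ∘ₗ comul).lTensor C ∘ₗ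
          comul := by
  simp only [coassoc_simps]

end Coalgebra

section Convolution

variable {R C A B : Type*} [CommSemiring R] [AddCommMonoid C] [Module R C] [Coalgebra R C]
  [Semiring A] [Algebra R A] [Semiring B] [Algebra R B]

/-- The functional `f : C → R` as an element of the convolution algebra of maps `C → A`, through
the structure map `R → A`. Products `f * g` of a functional with an `A`-valued map are written
`scalarConv A f * g`. -/
noncomputable def scalarConv (A : Type*) [Semiring A] [Algebra R A] (f : C →ₗ[R] R) :
    WithConv (C →ₗ[R] A) :=
  toConv (Algebra.linearMap R A ∘ₗ f)

lemma scalarConv_convMul_apply {ι : Type*} (f : C →ₗ[R] R) (g : WithConv (C →ₗ[R] A)) {c : C}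
    (𝓡 : Repr R c ι) :
    (scalarConv A f * g) c = ∑ i ∈ 𝓡.index, f (𝓡.left i) • g (𝓡.right i) := by
  simp [𝓡.convMul_apply, scalarConv, Algebra.smul_def]

lemma convMul_scalarConv_apply {ι : Type*} (g : WithConv (C →ₗ[R] A)) (f : C →ₗ[R] R) {c : C}
    (𝓡 : Repr R c ι) :
    (g * scalarConv A f) c = ∑ i ∈ 𝓡.index, f (𝓡.right i) • g (𝓡.left i) := by
  simp [𝓡.convMul_apply, scalarConv, Algebra.smul_def, Algebra.commutes]

lemma ofConv_scalarConv_convMul (f : C →ₗ[R] R) (g : WithConv (C →ₗ[R] A)) :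
    (scalarConv A f * g).ofConv =
      (TensorProduct.lid R A).toLinearMap ∘ₗ map f g.ofConv ∘ₗ comul := by
  ext c
  rw [scalarConv_convMul_apply _ _ (ℛ R c)]
  simp [← (ℛ R c).eq]

lemma ofConv_convMul_scalarConv (g : WithConv (C →ₗ[R] A)) (f : C →ₗ[R] R) :
    (g * scalarConv A f).ofConv =
      (TensorProduct.rid R A).toLinearMap ∘ₗ map g.ofConv f ∘ₗ comul := by
  ext c
  rw [convMul_scalarConv_apply _ _ (ℛ R c)]
  simp [← (ℛ R c).eq]

lemma toConv_comp_scalarConv_convMul (h : A →ₗ[R] B) (f : C →ₗ[R] R)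
    (g : WithConv (C →ₗ[R] A)) :
    toConv (h ∘ₗ (scalarConv A f * g).ofConv) = scalarConv B f * toConv (h ∘ₗ g.ofConv) := by
  ext c
  rw [scalarConv_convMul_apply _ _ (ℛ R c)]
  simpa using congr(h $(scalarConv_convMul_apply f g (ℛ R c)))

lemma toConv_comp_convMul_scalarConv (h : A →ₗ[R] B) (g : WithConv (C →ₗ[R] A))
    (f : C →ₗ[R] R) :
    toConv (h ∘ₗ (g * scalarConv A f).ofConv) = toConv (h ∘ₗ g.ofConv) * scalarConv B f := by
  ext c
  rw [convMul_scalarConv_apply _ _ (ℛ R c)]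
  simpa using congr(h $(convMul_scalarConv_apply g f (ℛ R c)))

open Algebra.TensorProduct in
lemma includeLeft_comp_convMul_includeRight_comp (f : C →ₗ[R] A) (g : C →ₗ[R] B) :
    toConv ((includeLeft : A →ₐ[R] A ⊗[R] B).toLinearMap ∘ₗ f) *
        toConv ((includeRight : B →ₐ[R] A ⊗[R] B).toLinearMap ∘ₗ g) =
      toConv (map f g ∘ₗ comul) := by
  ext c
  rw [(ℛ R c).convMul_apply]
  simp [← (ℛ R c).eq]

end Convolution

section Bialgebra

variable {R H : Type*} [CommSemiring R] [Semiring H] [Bialgebra R H]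

lemma toConv_lift_convMul_toConv_lift_eq_one {K : Type*} [Semiring K] [Bialgebra R K]
    {f g : H →ₗ[R] K →ₗ[R] R} {ι : H → Type*} {κ : K → Type*} (𝓡 : ∀ a, Repr R a (ι a))
    (𝓢 : ∀ b, Repr R b (κ b))
    (h : ∀ a b, ∑ i ∈ (𝓡 a).index, ∑ j ∈ (𝓢 b).index,
        f ((𝓡 a).left i) ((𝓢 b).left j) * g ((𝓡 a).right i) ((𝓢 b).right j) =
      counit (R := R) a * counit (R := R) b) :
    toConv (TensorProduct.lift f) * toConv (TensorProduct.lift g) = 1 := by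
  refine WithConv.ext (TensorProduct.ext' fun a b ↦ ?_)
  rw [((𝓡 a).tmul (𝓢 b)).convMul_apply]
  simpa [Finset.sum_product, mul_comm] using h a b

/-- The first axiom of a universal r-form, `ρ * μ = μᵒᵖ * ρ` in the convolution algebra of maps
`H ⊗ H → H`. -/
def IntertwinesMul (ρ : H ⊗[R] H →ₗ[R] R) : Prop :=
  scalarConv H ρ * toConv (mul' R H) =
    toConv (mul' R H ∘ₗ (TensorProduct.comm R H H).toLinearMap) * scalarConv H ρ

lemma intertwinesMul_lift {r : H →ₗ[R] H →ₗ[R] R} {ι : H → Type*} (𝓡 : ∀ a, Repr R a (ι a))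
    (h : ∀ a b, ∑ i ∈ (𝓡 a).index, ∑ j ∈ (𝓡 b).index,
        r ((𝓡 a).left i) ((𝓡 b).left j) • ((𝓡 a).right i * (𝓡 b).right j) =
      ∑ i ∈ (𝓡 a).index, ∑ j ∈ (𝓡 b).index,
        r ((𝓡 a).right i) ((𝓡 b).right j) • ((𝓡 b).left j * (𝓡 a).left i)) :
    IntertwinesMul (TensorProduct.lift r) := by
  refine WithConv.ext (TensorProduct.ext' fun a b ↦ ?_)
  rw [scalarConv_convMul_apply _ _ ((𝓡 a).tmul (𝓡 b)),
    convMul_scalarConv_apply _ _ ((𝓡 a).tmul (𝓡 b))]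
  simpa [Finset.sum_product] using h a b

end Bialgebra

section Antipode

variable {R H A : Type*} [CommSemiring R] [Semiring H] [HopfAlgebra R H] [Semiring A] [Algebra R A]

lemma comp_antipode_convMul_algHom (f : H →ₐ[R] A) :
    toConv (f.toLinearMap ∘ₗ antipode R) * toConv f.toLinearMap = 1 := by
  have h := algHom_comp_convMul_distrib f (toConv (antipode R (A := H))) (toConv .id)
  rw [antipode_mul_id] at h
  exact WithConv.ext (h.symm.trans (by ext; simp))

open Algebra.TensorProduct in
/- In the convolution algebra of maps `H → H ⊗ H`, `comul` is the product of the two inclusions, and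
both sides are inverses of it. -/
lemma comul_comp_antipode :
    comul ∘ₗ antipode R =
      map (antipode R) (antipode R) ∘ₗ (TensorProduct.comm R H H).toLinearMap ∘ₗ comul := by
  let inl : H →ₐ[R] H ⊗[R] H := includeLeft
  let inr : H →ₐ[R] H ⊗[R] H := includeRight
  have comul_eq : toConv (comul (R := R)) = toConv inl.toLinearMap * toConv inr.toLinearMap := by
    rw [← comp_id inl.toLinearMap, ← comp_id inr.toLinearMap,
      includeLeft_comp_convMul_includeRight_comp, TensorProduct.map_id, id_comp]
  have left_inv : toConv (inr.toLinearMap ∘ₗ antipode R) * toConv (inl.toLinearMap ∘ₗ antipode R) *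
      toConv (comul (R := R)) = 1 := by
    rw [comul_eq, mul_assoc, ← mul_assoc (toConv (inl.toLinearMap ∘ₗ _)),
      comp_antipode_convMul_algHom, one_mul, comp_antipode_convMul_algHom]
  have inv_unique := left_inv_eq_right_inv left_inv comul_right_inv
  ext a
  have h := congr($inv_unique a)
  rw [(ℛ R a).convMul_apply] at h
  simpa [inl, inr, ← (ℛ R a).eq] using h.symm

/-- The Sweedler representation `S a₍₂₎ ⊗ S a₍₁₎` of the comultiplication of `S a`. -/
noncomputable def antipodeRepr {a : H} {ι : Type*} (𝓡 : Repr R a ι) :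
    Repr R (antipode R a) ι where
  index := 𝓡.index
  left i := antipode R (𝓡.right i)
  right i := antipode R (𝓡.left i)
  eq := by
    rw [← LinearMap.comp_apply, comul_comp_antipode]
    simp [← 𝓡.eq]

lemma toConv_scalarConv_convMul_comp_antipode (f : H →ₗ[R] R) (g : WithConv (H →ₗ[R] A)) :
    toConv ((scalarConv A f * g).ofConv ∘ₗ antipode R) =
      toConv (g.ofConv ∘ₗ antipode R) * scalarConv A (f ∘ₗ antipode R) := by
  ext a
  rw [convMul_scalarConv_apply _ _ (ℛ R a)]
  exact scalarConv_convMul_apply f g (antipodeRepr (ℛ R a))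

lemma toConv_convMul_scalarConv_comp_antipode (g : WithConv (H →ₗ[R] A)) (f : H →ₗ[R] R) :
    toConv ((g * scalarConv A f).ofConv ∘ₗ antipode R) =
      scalarConv A (f ∘ₗ antipode R) * toConv (g.ofConv ∘ₗ antipode R) := by
  ext a
  rw [scalarConv_convMul_apply _ _ (ℛ R a)]
  exact convMul_scalarConv_apply g f (antipodeRepr (ℛ R a))

variable (R H) in
/-- The map `a ↦ a₍₁₎ ⊗ S a₍₂₎`. Convolution identities between maps on `H ⊗ H` are pulled back
along it to identities between maps on `H`. -/
noncomputable def antipodeGraph : H →ₗ[R] H ⊗[R] H := (antipode R).lTensor H ∘ₗ comul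

lemma antipodeGraph_apply {a : H} {ι : Type*} (𝓡 : Repr R a ι) :
    antipodeGraph R H a = ∑ i ∈ 𝓡.index, 𝓡.left i ⊗ₜ antipode R (𝓡.right i) := by
  simp [antipodeGraph, ← 𝓡.eq]

lemma mul'_antipodeGraph (a : H) :
    mul' R H (antipodeGraph R H a) = algebraMap R H (counit a) := by
  simp [antipodeGraph]

lemma counit_antipodeGraph (a : H) :
    counit (R := R) (antipodeGraph R H a) = counit (R := R) a := by
  rw [antipodeGraph_apply (ℛ R a)]
  simpa [counit_antipode, mul_comm] using congr(counit (R := R) $(sum_counit_smul (ℛ R a)))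

/- Sweedler form: `Δ(a₍₁₎ ⊗ S a₍₂₎) = (a₍₁₎ ⊗ S a₍₄₎) ⊗ (a₍₂₎ ⊗ S a₍₃₎)`. -/
lemma comul_antipodeGraph {a : H} {ι : Type*} {κ : ι → Type*} (𝓡 : Repr R a ι)
    (𝓢 : ∀ i, Repr R (𝓡.right i) (κ i)) :
    comul (R := R) (antipodeGraph R H a) = ∑ i ∈ 𝓡.index, ∑ j ∈ (𝓢 i).index,
      (𝓡.left i ⊗ₜ antipode R ((𝓢 i).right j)) ⊗ₜ antipodeGraph R H ((𝓢 i).left j) := by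
  let Φ : (H ⊗[R] H) ⊗[R] (H ⊗[R] H) →ₗ[R] (H ⊗[R] H) ⊗[R] (H ⊗[R] H) :=
    (TensorProduct.tensorTensorTensorComm R H H H H).toLinearMap ∘ₗ
      (map (antipode R) (antipode R) ∘ₗ (TensorProduct.comm R H H).toLinearMap).lTensor (H ⊗[R] H)
  have comul_comp_graph : comul ∘ₗ antipodeGraph R H = Φ ∘ₗ map comul comul ∘ₗ comul := by
    simp only [Φ, antipodeGraph, TensorProduct.comul_def]
    simp only [coassoc_simps, comul_comp_antipode]
  have Φ_apply (x y z : H) :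
      Φ ((TensorProduct.assoc R H H (H ⊗[R] H)).symm
          (x ⊗ₜ TensorProduct.assoc R H H H (comul (R := R) y ⊗ₜ z))) =
        (x ⊗ₜ antipode R z) ⊗ₜ antipodeGraph R H y := by
    simp [Φ, ← (ℛ R y).eq, antipodeGraph_apply (ℛ R y), sum_tmul, tmul_sum]
  rw [← LinearMap.comp_apply, comul_comp_graph, map_comul_comul_comp_comul]
  simp only [LinearMap.comp_apply]
  rw [← 𝓡.eq]
  simp [← (𝓢 _).eq, Φ_apply, tmul_sum]

lemma convMul_antipodeGraph (f g : WithConv (H ⊗[R] H →ₗ[R] A)) {a : H} {ι : Type*}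
    {κ : ι → Type*} (𝓡 : Repr R a ι) (𝓢 : ∀ i, Repr R (𝓡.right i) (κ i)) :
    (f * g) (antipodeGraph R H a) = ∑ i ∈ 𝓡.index, ∑ j ∈ (𝓢 i).index,
      f (𝓡.left i ⊗ₜ antipode R ((𝓢 i).right j)) * g (antipodeGraph R H ((𝓢 i).left j)) := by
  simp [convMul_apply, comul_antipodeGraph 𝓡 𝓢]

end Antipode

section Drinfeld

variable {R H : Type*} [CommSemiring R] [Semiring H] [HopfAlgebra R H] {ρ σ : H ⊗[R] H →ₗ[R] R}

/-- The Drinfeld functional `u(a) = ρ(a₍₁₎ ⊗ S a₍₂₎)` of an r-form `ρ`, which implements the square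
of the antipode through `u * S² = id * u`. -/
noncomputable def drinfeldFunctional (ρ : H ⊗[R] H →ₗ[R] R) : H →ₗ[R] R :=
  ρ ∘ₗ antipodeGraph R H

/-- The functional `v(a) = σ(S² a₍₁₎ ⊗ S a₍₂₎)`, which for `σ` the convolution inverse of an r-form
is the convolution inverse of its Drinfeld functional. -/
noncomputable def drinfeldInvFunctional (σ : H ⊗[R] H →ₗ[R] R) : H →ₗ[R] R :=
  σ ∘ₗ map (antipode R ∘ₗ antipode R) (antipode R) ∘ₗ comul

/-- The convolution product `u * S * v` of the antipode with the two Drinfeld functionals, which is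
the inverse of the antipode. -/
noncomputable def antipodeInv (ρ σ : H ⊗[R] H →ₗ[R] R) : H →ₗ[R] H :=
  (scalarConv H (drinfeldFunctional ρ) * toConv (antipode R) *
    scalarConv H (drinfeldInvFunctional σ)).ofConv

lemma scalarConv_convMul_mul'_antipodeGraph (ρ : H ⊗[R] H →ₗ[R] R) (a : H) :
    (scalarConv H ρ * toConv (mul' R H)) (antipodeGraph R H a) =
      algebraMap R H (drinfeldFunctional ρ a) := by
  let 𝓡 := ℛ R a
  let 𝓢 (i) := ℛ R (𝓡.right i)
  calc (scalarConv H ρ * toConv (mul' R H)) (antipodeGraph R H a)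
      = algebraMap R H (∑ i ∈ 𝓡.index, ρ (𝓡.left i ⊗ₜ
          antipode R (∑ j ∈ (𝓢 i).index, counit (R := R) ((𝓢 i).left j) • (𝓢 i).right j))) := by
        simp [convMul_antipodeGraph _ _ 𝓡 𝓢, mul'_antipodeGraph, scalarConv, tmul_sum,
          ← map_mul, mul_comm]
    _ = algebraMap R H (drinfeldFunctional ρ a) := by
        simp [sum_counit_smul, drinfeldFunctional, antipodeGraph_apply 𝓡]

namespace IntertwinesMul

/- Sweedler form: `u(a₍₂₎) S(a₍₃₎) a₍₁₎ = u(a) 1`. -/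
lemma sum_scalarConv_convMul_antipode_mul (hρ : IntertwinesMul ρ) {a : H} {ι : Type*}
    (𝓡 : Repr R a ι) :
    ∑ i ∈ 𝓡.index,
      (scalarConv H (drinfeldFunctional ρ) * toConv (antipode R (A := H))) (𝓡.right i) * 𝓡.left i =
        algebraMap R H (drinfeldFunctional ρ a) := by
  let 𝓢 (i : ι) := ℛ R (𝓡.right i)
  rw [← scalarConv_convMul_mul'_antipodeGraph, hρ, convMul_antipodeGraph _ _ 𝓡 𝓢]
  refine Finset.sum_congr rfl fun i _ ↦ ?_
  rw [scalarConv_convMul_apply _ _ (𝓢 i), Finset.sum_mul]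
  refine Finset.sum_congr rfl fun j _ ↦ ?_
  simp [drinfeldFunctional, scalarConv, Algebra.smul_def, mul_assoc, Algebra.commutes]

lemma antipode_convMul_scalarConv_convMul (hρ : IntertwinesMul ρ) :
    toConv (antipode R) *
        (scalarConv H (drinfeldFunctional ρ) * toConv (antipode R ∘ₗ antipode R)) =
      scalarConv H (drinfeldFunctional ρ) := by
  ext a
  have comp := toConv_comp_scalarConv_convMul (antipode R) (drinfeldFunctional ρ)
    (toConv (antipode R (A := H)))
  rw [(ℛ R a).convMul_apply, ← comp]
  simpa [scalarConv, antipode_mul_antidistrib, Algebra.algebraMap_eq_smul_one] using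
    congr(antipode R $(hρ.sum_scalarConv_convMul_antipode_mul (ℛ R a)))

lemma scalarConv_convMul_antipode_comp_antipode (hρ : IntertwinesMul ρ) :
    scalarConv H (drinfeldFunctional ρ) * toConv (antipode R ∘ₗ antipode R) =
      toConv .id * scalarConv H (drinfeldFunctional ρ) := by
  conv_rhs => rw [← hρ.antipode_convMul_scalarConv_convMul, ← mul_assoc, id_mul_antipode, one_mul]

lemma antipode_comp_antipode_convMul_scalarConv_convMul (hρ : IntertwinesMul ρ) :
    toConv (antipode R ∘ₗ antipode R) * scalarConv H (drinfeldFunctional ρ ∘ₗ antipode R) *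
      toConv (antipode R) = scalarConv H (drinfeldFunctional ρ ∘ₗ antipode R) := by
  ext a
  have comp := toConv_scalarConv_convMul_comp_antipode (drinfeldFunctional ρ)
    (toConv (antipode R (A := H)))
  rw [(ℛ R a).convMul_apply, ← comp]
  exact hρ.sum_scalarConv_convMul_antipode_mul (antipodeRepr (ℛ R a))

lemma antipode_comp_antipode_convMul_scalarConv (hρ : IntertwinesMul ρ) :
    toConv (antipode R ∘ₗ antipode R) * scalarConv H (drinfeldFunctional ρ ∘ₗ antipode R) =
      scalarConv H (drinfeldFunctional ρ ∘ₗ antipode R) * toConv .id := by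
  conv_rhs => rw [← hρ.antipode_comp_antipode_convMul_scalarConv_convMul, mul_assoc,
    antipode_mul_id, mul_one]

open Algebra.TensorProduct in
lemma scalarConv_convMul_map_comp_comul (hρ : IntertwinesMul ρ) :
    scalarConv (H ⊗[R] H) (drinfeldFunctional ρ) *
        toConv (map (antipode R ∘ₗ antipode R) (antipode R) ∘ₗ comul) =
      toConv (includeLeft : H →ₐ[R] H ⊗[R] H).toLinearMap *
        (scalarConv (H ⊗[R] H) (drinfeldFunctional ρ) *
          toConv ((includeRight : H →ₐ[R] H ⊗[R] H).toLinearMap ∘ₗ antipode R)) := by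
  let inl : H →ₐ[R] H ⊗[R] H := includeLeft
  have inl_comm : scalarConv (H ⊗[R] H) (drinfeldFunctional ρ) *
      toConv (inl.toLinearMap ∘ₗ antipode R ∘ₗ antipode R) =
        toConv inl.toLinearMap * scalarConv (H ⊗[R] H) (drinfeldFunctional ρ) := by
    have h := congr(toConv (inl.toLinearMap ∘ₗ
      ($hρ.scalarConv_convMul_antipode_comp_antipode).ofConv))
    rwa [toConv_comp_scalarConv_convMul, toConv_comp_convMul_scalarConv] at h
  rw [← includeLeft_comp_convMul_includeRight_comp, ← mul_assoc, inl_comm, mul_assoc]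

lemma scalarConv_drinfeldFunctional_convMul (hρ : IntertwinesMul ρ)
    (hσ : toConv σ * toConv ρ = 1) :
    scalarConv H (drinfeldFunctional ρ) * scalarConv H (drinfeldInvFunctional σ) = 1 := by
  refine (toConv_comp_scalarConv_convMul (Algebra.linearMap R H ∘ₗ σ) (drinfeldFunctional ρ)
    (toConv (map (antipode R ∘ₗ antipode R) (antipode R) ∘ₗ comul))).symm.trans ?_
  rw [hρ.scalarConv_convMul_map_comp_comul]
  ext a
  let 𝓡 := ℛ R a
  let 𝓢 (i) := ℛ R (𝓡.right i)
  have pullback := congr(algebraMap R H ($hσ (antipodeGraph R H a)))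
  rw [convMul_antipodeGraph _ _ 𝓡 𝓢] at pullback
  simpa [𝓡.convMul_apply, scalarConv_convMul_apply _ _ (𝓢 _), Finset.mul_sum, drinfeldFunctional,
    counit_antipodeGraph, ← map_mul, mul_comm] using pullback

lemma scalarConv_drinfeldInvFunctional_convMul (hρ : IntertwinesMul ρ)
    (hσ : toConv σ * toConv ρ = 1) :
    scalarConv H (drinfeldInvFunctional σ ∘ₗ antipode R) *
      scalarConv H (drinfeldFunctional ρ ∘ₗ antipode R) = 1 := by
  refine (toConv_scalarConv_convMul_comp_antipode _
    (scalarConv H (drinfeldInvFunctional σ))).symm.trans ?_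
  rw [hρ.scalarConv_drinfeldFunctional_convMul hσ]
  ext a
  simp [counit_antipode]

lemma antipode_comp_antipodeInv (hρ : IntertwinesMul ρ) (hσ : toConv σ * toConv ρ = 1) :
    antipode R ∘ₗ antipodeInv ρ σ = .id := by
  apply toConv_injective
  calc toConv (antipode R ∘ₗ antipodeInv ρ σ)
      = scalarConv H (drinfeldFunctional ρ) * toConv (antipode R ∘ₗ antipode R) *
          scalarConv H (drinfeldInvFunctional σ) := by
        rw [antipodeInv, toConv_comp_convMul_scalarConv, toConv_comp_scalarConv_convMul]
    _ = toConv .id *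
          (scalarConv H (drinfeldFunctional ρ) * scalarConv H (drinfeldInvFunctional σ)) := by
        rw [hρ.scalarConv_convMul_antipode_comp_antipode, mul_assoc]
    _ = toConv .id := by rw [hρ.scalarConv_drinfeldFunctional_convMul hσ, mul_one]

lemma antipodeInv_comp_antipode (hρ : IntertwinesMul ρ) (hσ : toConv σ * toConv ρ = 1) :
    antipodeInv ρ σ ∘ₗ antipode R = .id := by
  apply toConv_injective
  calc toConv (antipodeInv ρ σ ∘ₗ antipode R)
      = scalarConv H (drinfeldInvFunctional σ ∘ₗ antipode R) *
          (toConv (antipode R ∘ₗ antipode R) *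
            scalarConv H (drinfeldFunctional ρ ∘ₗ antipode R)) := by
        rw [antipodeInv, toConv_convMul_scalarConv_comp_antipode,
          toConv_scalarConv_convMul_comp_antipode]
    _ = scalarConv H (drinfeldInvFunctional σ ∘ₗ antipode R) *
          scalarConv H (drinfeldFunctional ρ ∘ₗ antipode R) * toConv .id := by
        rw [hρ.antipode_comp_antipode_convMul_scalarConv, mul_assoc]
    _ = toConv .id := by rw [hρ.scalarConv_drinfeldInvFunctional_convMul hσ, one_mul]

lemma bijective_antipode (hρ : IntertwinesMul ρ) (hσ : toConv σ * toConv ρ = 1) :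
    Function.Bijective (antipode R (A := H)) :=
  Function.bijective_iff_has_inverse.mpr ⟨antipodeInv ρ σ,
    fun a ↦ congr($(hρ.antipodeInv_comp_antipode hσ) a),
    fun a ↦ congr($(hρ.antipode_comp_antipodeInv hσ) a)⟩

end IntertwinesMul

lemma antipodeInv_eq_comp_iterate_comul : antipodeInv ρ σ =
    (TensorProduct.lid R H).toLinearMap ∘ₗ
      map (ρ ∘ₗ (antipode R).lTensor H)
        ((TensorProduct.rid R H).toLinearMap ∘ₗ
          map (antipode R) (σ ∘ₗ map (antipode R ∘ₗ antipode R) (antipode R))) ∘ₗ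
      (TensorProduct.assoc R H H (H ⊗[R] (H ⊗[R] H))).symm.toLinearMap ∘ₗ
      lTensor H (lTensor H (lTensor H comul)) ∘ₗ lTensor H (lTensor H comul) ∘ₗ
        lTensor H comul ∘ₗ comul := by
  simp only [antipodeInv, mul_assoc, ofConv_scalarConv_convMul, ofConv_convMul_scalarConv,
    drinfeldFunctional, drinfeldInvFunctional, antipodeGraph]
  simp only [coassoc_simps]

lemma antipodeInv_apply {a : H} {ι : Type*} [Fintype ι] {c₁ c₂ c₃ c₄ c₅ : ι → H}
    (hc : (lTensor H (lTensor H (lTensor H comul)) ∘ₗ lTensor H (lTensor H comul) ∘ₗ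
      lTensor H comul ∘ₗ comul) a =
        ∑ t, c₁ t ⊗ₜ[R] (c₂ t ⊗ₜ[R] (c₃ t ⊗ₜ[R] (c₄ t ⊗ₜ[R] c₅ t)))) :
    antipodeInv ρ σ a = ∑ t, (ρ (c₁ t ⊗ₜ antipode R (c₂ t)) *
      σ (antipode R (antipode R (c₄ t)) ⊗ₜ antipode R (c₅ t))) • antipode R (c₃ t) := by
  simp only [LinearMap.comp_apply] at hc
  simp only [antipodeInv_eq_comp_iterate_comul, LinearMap.comp_apply, hc]
  simp [mul_comm (ρ _), mul_smul]

end Drinfeld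

universe u v

theorem stmt9_general {R : Type v} {H : Type u} [CommSemiring R] [Semiring H] [HopfAlgebra R H]
    (r rbar : H →ₗ[R] H →ₗ[R] R)
    (hr1 : ∀ (a b : H) (ι κ : Type u) (_ : Fintype ι) (_ : Fintype κ)
      (a1 a2 : ι → H) (b1 b2 : κ → H),
      comul (R := R) a = ∑ t, a1 t ⊗ₜ[R] a2 t →
      comul (R := R) b = ∑ s, b1 s ⊗ₜ[R] b2 s →
      ∑ t, ∑ s, r (a1 t) (b1 s) • (a2 t * b2 s)
        = ∑ t, ∑ s, r (a2 t) (b2 s) • (b1 s * a1 t))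
    (hrbar : ∀ (a b : H) (ι κ : Type u) (_ : Fintype ι) (_ : Fintype κ)
      (a1 a2 : ι → H) (b1 b2 : κ → H),
      comul (R := R) a = ∑ t, a1 t ⊗ₜ[R] a2 t →
      comul (R := R) b = ∑ s, b1 s ⊗ₜ[R] b2 s →
      ∑ t, ∑ s, rbar (a1 t) (b1 s) * r (a2 t) (b2 s)
        = counit (R := R) a * counit (R := R) b) :
    Function.Bijective (antipode R (A := H)) ∧
    ∀ (a : H) (ι : Type*) (_ : Fintype ι) (c1 c2 c3 c4 c5 : ι → H),
      (lTensor H (lTensor H (lTensor H comul)) ∘ₗ lTensor H (lTensor H comul) ∘ₗ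
        lTensor H comul ∘ₗ comul) a
          = ∑ t, c1 t ⊗ₜ[R] (c2 t ⊗ₜ[R] (c3 t ⊗ₜ[R] (c4 t ⊗ₜ[R] c5 t))) →
      antipode R (∑ t, (r (c1 t) (antipode R (c2 t)) *
          rbar (antipode R (antipode R (c4 t))) (antipode R (c5 t))) • antipode R (c3 t)) = a := by
  let 𝓡 (a : H) : Repr R a (ℛ R a).index :=
    ⟨Finset.univ, fun i ↦ (ℛ R a).left i, fun i ↦ (ℛ R a).right i,
      (Finset.sum_coe_sort _ _).trans (ℛ R a).eq⟩
  have hρ : IntertwinesMul (TensorProduct.lift r) := intertwinesMul_lift 𝓡 fun a b ↦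
    hr1 a b _ _ _ _ _ _ _ _ (𝓡 a).eq.symm (𝓡 b).eq.symm
  have hσ : toConv (TensorProduct.lift rbar) * toConv (TensorProduct.lift r) = 1 :=
    toConv_lift_convMul_toConv_lift_eq_one 𝓡 𝓡 fun a b ↦
      hrbar a b _ _ _ _ _ _ _ _ (𝓡 a).eq.symm (𝓡 b).eq.symm
  refine ⟨hρ.bijective_antipode hσ, fun a ι _ c1 c2 c3 c4 c5 hc ↦ ?_⟩
  have h := congr($(hρ.antipode_comp_antipodeInv hσ) a)
  rwa [LinearMap.comp_apply, antipodeInv_apply hc] at h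

/-- for a coquasitriangular Hopf algebra `H` with universal r-form `r`
and convolution inverse `r̄`, the antipode `S` is bijective, with
`S⁻¹(a) = r(a₍₁₎ ⊗ S(a₍₂₎)) S(a₍₃₎) r̄(S²(a₍₄₎) ⊗ S(a₍₅₎))`. -/
theorem stmt9
    {H : Type} [Ring H] [HopfAlgebra ℂ H]
    (r rbar : H →ₗ[ℂ] H →ₗ[ℂ] ℂ)
    (hr1 : ∀ (a b : H) (ι κ : Type) (_ : Fintype ι) (_ : Fintype κ)
      (a1 a2 : ι → H) (b1 b2 : κ → H),
      Coalgebra.comul (R := ℂ) a = ∑ t, a1 t ⊗ₜ[ℂ] a2 t →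
      Coalgebra.comul (R := ℂ) b = ∑ s, b1 s ⊗ₜ[ℂ] b2 s →
      ∑ t, ∑ s, r (a1 t) (b1 s) • (a2 t * b2 s)
        = ∑ t, ∑ s, r (a2 t) (b2 s) • (b1 s * a1 t))
    (hr2 : ∀ (a b c : H) (κ : Type) (_ : Fintype κ) (c1 c2 : κ → H),
      Coalgebra.comul (R := ℂ) c = ∑ s, c1 s ⊗ₜ[ℂ] c2 s →
      r (a * b) c = ∑ s, r a (c1 s) * r b (c2 s))
    (hr2' : ∀ c : H, r 1 c = Coalgebra.counit (R := ℂ) c)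
    (hr3 : ∀ (a b c : H) (ι : Type) (_ : Fintype ι) (a1 a2 : ι → H),
      Coalgebra.comul (R := ℂ) a = ∑ t, a1 t ⊗ₜ[ℂ] a2 t →
      r a (b * c) = ∑ t, r (a1 t) c * r (a2 t) b)
    (hr3' : ∀ a : H, r a 1 = Coalgebra.counit (R := ℂ) a)
    -- r̄ is a two-sided convolution inverse of r
    (hrbar : ∀ (a b : H) (ι κ : Type) (_ : Fintype ι) (_ : Fintype κ)
      (a1 a2 : ι → H) (b1 b2 : κ → H),
      Coalgebra.comul (R := ℂ) a = ∑ t, a1 t ⊗ₜ[ℂ] a2 t →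
      Coalgebra.comul (R := ℂ) b = ∑ s, b1 s ⊗ₜ[ℂ] b2 s →
      (∑ t, ∑ s, rbar (a1 t) (b1 s) * r (a2 t) (b2 s)
          = Coalgebra.counit (R := ℂ) a * Coalgebra.counit (R := ℂ) b) ∧
      (∑ t, ∑ s, r (a1 t) (b1 s) * rbar (a2 t) (b2 s)
          = Coalgebra.counit (R := ℂ) a * Coalgebra.counit (R := ℂ) b)) :
    Function.Bijective (HopfAlgebra.antipode (R := ℂ) (A := H)) ∧
    ∀ (a : H) (ι : Type) (_ : Fintype ι) (c1 c2 c3 c4 c5 : ι → H),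
      comul4 a = ∑ t, c1 t ⊗ₜ[ℂ] (c2 t ⊗ₜ[ℂ] (c3 t ⊗ₜ[ℂ] (c4 t ⊗ₜ[ℂ] c5 t))) →
      HopfAlgebra.antipode (R := ℂ)
        (∑ t, (r (c1 t) (HopfAlgebra.antipode (R := ℂ) (c2 t)) *
            rbar (HopfAlgebra.antipode (R := ℂ) (HopfAlgebra.antipode (R := ℂ) (c4 t)))
              (HopfAlgebra.antipode (R := ℂ) (c5 t))) •
          HopfAlgebra.antipode (R := ℂ) (c3 t)) = a := by
  exact stmt9_general r rbar hr1 fun a b ι κ _ _ a1 a2 b1 b2 ha hb ↦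
    (hrbar a b ι κ _ _ a1 a2 b1 b2 ha hb).1
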